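/- arXiv:1210.0190 — 2 statements merged into one kernel-verified Lean document; each statement's English description precedes it below -/
import Mathlib

section
/- Let W₁ and W₂ be finite-dimensional irreducible 𝔤-modules over k such that W₁ ⊗_k F and W₂ ⊗_k F are semisimple as (𝔤 ⊗_k F)-modules, and let V_α ⊆ W₁ ⊗_k F and V_β ⊆ W₂ ⊗_k F be irreducible (𝔤 ⊗_k F)-submodules. Then W₁ and W₂ are isomorphic as 𝔤-modules if and only if there exist σ, τ ∈ S such that σ(V_α) and τ(V_β) are isomorphic as (𝔤 ⊗_k F)-modules. -/
open scoped TensorProduct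

section

variable (k F : Type*) [Field k] [Field F] [Algebra k F]

private lemma galMap_aux (σ : F ≃ₐ[k] F) (W : Type*) [AddCommGroup W] [Module k W]
    (c : F) (x : F ⊗[k] W) :
    LinearMap.rTensor W σ.toLinearMap (c • x) = σ c • LinearMap.rTensor W σ.toLinearMap x := by
  induction x using TensorProduct.induction_on with
  | zero => simp
  | tmul f w => simp [TensorProduct.smul_tmul', smul_eq_mul, map_mul]
  | add x y hx hy => rw [smul_add, map_add, map_add, smul_add, hx, hy]

/-- The `σ`-semilinear Galois action `id_W ⊗ σ` on the base change `F ⊗[k] W`. -/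
noncomputable def galMap (σ : F ≃ₐ[k] F) (W : Type*) [AddCommGroup W] [Module k W] :
    (F ⊗[k] W) →ₛₗ[(σ.toRingEquiv : F →+* F)] (F ⊗[k] W) where
  toFun := LinearMap.rTensor W σ.toLinearMap
  map_add' := map_add _
  map_smul' := galMap_aux k F σ W

/-- The image `σ(V)` of an `F`-subspace of `F ⊗[k] W` under the Galois action:
again an `F`-subspace. -/
noncomputable def galSub (σ : F ≃ₐ[k] F) {W : Type*} [AddCommGroup W] [Module k W]
    (V : Submodule F (F ⊗[k] W)) : Submodule F (F ⊗[k] W) :=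
  Submodule.map (galMap k F σ W) V

variable (𝔤 : Type*) [LieRing 𝔤] [LieAlgebra k 𝔤]

/-- `σ(V_α)` and `τ(V_β)` are isomorphic as `(𝔤 ⊗_k F)`-modules; since the Galois
images are a priori only `F`-subspaces, we phrase this via the (unique) Lie submodules
having these subspaces as underlying `F`-subspaces. -/
def GalConjIso (σ τ : F ≃ₐ[k] F)
    {W₁ W₂ : Type*} [AddCommGroup W₁] [Module k W₁] [LieRingModule 𝔤 W₁] [LieModule k 𝔤 W₁]
    [AddCommGroup W₂] [Module k W₂] [LieRingModule 𝔤 W₂] [LieModule k 𝔤 W₂]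
    (Vα : LieSubmodule F (F ⊗[k] 𝔤) (F ⊗[k] W₁))
    (Vβ : LieSubmodule F (F ⊗[k] 𝔤) (F ⊗[k] W₂)) : Prop :=
  ∃ (Vα' : LieSubmodule F (F ⊗[k] 𝔤) (F ⊗[k] W₁))
    (Vβ' : LieSubmodule F (F ⊗[k] 𝔤) (F ⊗[k] W₂)),
    (Vα' : Submodule F (F ⊗[k] W₁)) = galSub k F σ (Vα : Submodule F (F ⊗[k] W₁)) ∧
    (Vβ' : Submodule F (F ⊗[k] W₂)) = galSub k F τ (Vβ : Submodule F (F ⊗[k] W₂)) ∧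
    Nonempty (Vα' ≃ₗ⁅F, F ⊗[k] 𝔤⁆ Vβ')

/-- A Lie module is semisimple if it is a direct sum of irreducible submodules. -/
def IsSemisimpleLieModule (R L M : Type*) [CommRing R] [LieRing L] [LieAlgebra R L]
    [AddCommGroup M] [Module R M] [LieRingModule L M] : Prop :=
  ∃ (ι : Type) (p : ι → LieSubmodule R L M),
    (∀ i, IsAtom (p i)) ∧ iSupIndep p ∧ (⨆ i, p i) = ⊤

end

/-!
The sum of the Galois conjugates `σ(V)` of a nonzero submodule `V ⊆ F ⊗ W` is Galois stable, so by
descent it contains some `1 ⊗ w ≠ 0`; when `W` is irreducible it is therefore all of `F ⊗ W`. If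
`V` is irreducible, `F ⊗ W` is thus a sum of irreducible submodules, and every submodule of it is a
direct summand. Given `W₁ ≃ W₂`, the surjection `F ⊗ W₁ ≃ F ⊗ W₂ → V_β` is nonzero on some
`σ(V_α)`, and Schur's lemma applies. Conversely, an isomorphism `σ(V_α) ≃ τ(V_β)` extends to a
nonzero homomorphism `F ⊗ W₁ → F ⊗ W₂`; restricting it to `1 ⊗ W₁` and contracting its values along
a suitable `k`-linear functional on `F` gives a nonzero homomorphism `W₁ → W₂`.
-/

section LieModule

variable {R L M N : Type*} [CommRing R] [LieRing L]
  [AddCommGroup M] [Module R M] [LieRingModule L M]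
  [AddCommGroup N] [Module R N] [LieRingModule L N]

theorem lieModule_isIrreducible_of_isAtom {V : LieSubmodule R L M} (hV : IsAtom V) :
    LieModule.IsIrreducible R L V := by
  have : Nontrivial V := (LieSubmodule.nontrivial_iff_ne_bot R L M).2 hV.1
  refine LieModule.IsIrreducible.mk fun P hP => ?_
  have hinj := LieSubmodule.map_injective_of_injective V.injective_incl
  refine hinj (((hV.le_iff.1 LieSubmodule.map_incl_le).resolve_left fun h => hP (hinj ?_)).trans
    V.map_incl_top.symm)
  rw [h, LieSubmodule.map_bot]

theorem lieModuleHom_bijective_of_ne_zero [LieModule.IsIrreducible R L M]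
    [LieModule.IsIrreducible R L N] {f : M →ₗ⁅R,L⁆ N} (hf : f ≠ 0) : Function.Bijective f := by
  rw [Function.Bijective, ← f.ker_eq_bot, ← f.range_eq_top]
  constructor
  · refine (eq_bot_or_eq_top f.ker).resolve_right fun h => hf ?_
    ext m
    exact LieModuleHom.mem_ker.1 (h ▸ LieSubmodule.mem_top m)
  · refine (eq_bot_or_eq_top f.range).resolve_left fun h => hf ?_
    ext m
    exact (LieSubmodule.mem_bot _).1 (h ▸ (f.mem_range _).2 ⟨m, rfl⟩)

theorem nonempty_lieModuleEquiv_of_ne_zero [LieModule.IsIrreducible R L M]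
    [LieModule.IsIrreducible R L N] {f : M →ₗ⁅R,L⁆ N} (hf : f ≠ 0) :
    Nonempty (M ≃ₗ⁅R,L⁆ N) :=
  ⟨{ f, LinearEquiv.ofBijective (f : M →ₗ[R] N) (lieModuleHom_bijective_of_ne_zero hf) with }⟩

theorem exists_comp_incl_ne_zero {ι : Sort*} {p : ι → LieSubmodule R L M} (hp : ⨆ i, p i = ⊤)
    {f : M →ₗ⁅R,L⁆ N} (hf : f ≠ 0) : ∃ i, f.comp (p i).incl ≠ 0 := by
  contrapose! hf
  have hker : f.ker = ⊤ :=
    top_le_iff.1 (hp ▸ iSup_le fun i m hm => LieModuleHom.congr_fun (hf i) ⟨m, hm⟩)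
  ext m
  exact LieModuleHom.mem_ker.1 (hker ▸ LieSubmodule.mem_top m)

theorem exists_comp_incl_eq_id [ComplementedLattice (LieSubmodule R L M)]
    (V : LieSubmodule R L M) : ∃ p : M →ₗ⁅R,L⁆ V, p.comp V.incl = LieModuleHom.id := by
  obtain ⟨C, hVC⟩ := exists_isCompl V
  have hVC' := LieSubmodule.isCompl_toSubmodule.2 hVC
  let p : M →ₗ[R] V := (V : Submodule R M).projectionOnto C hVC'
  have hpV (v : V) : p v = v := Submodule.projectionOnto_apply_left hVC' v
  have hpC {c : M} (hc : c ∈ C) : p c = 0 := Submodule.projectionOnto_apply_right hVC' ⟨c, hc⟩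
  refine ⟨{ p with map_lie' := fun {x m} => ?_ }, LieModuleHom.ext hpV⟩
  obtain ⟨v, hv, c, hc, rfl⟩ :=
    (LieSubmodule.mem_sup V C m).1 (hVC.sup_eq_top ▸ LieSubmodule.mem_top m)
  change p ⁅x, v + c⁆ = ⁅x, p (v + c)⁆
  rw [lie_add, map_add, map_add, hpC hc, hpC (C.lie_mem hc), add_zero, add_zero, hpV ⟨v, hv⟩]
  exact hpV ⁅x, (⟨v, hv⟩ : V)⁆

end LieModule

section BaseChange

variable {R A L M N : Type*} [CommRing R] [CommRing A] [Algebra R A] [LieRing L] [LieAlgebra R L]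
  [AddCommGroup M] [Module R M] [LieRingModule L M] [LieModule R L M]
  [AddCommGroup N] [Module R N] [LieRingModule L N] [LieModule R L N]

theorem map_lie_of_map_lie_tmul {L' N' : Type*} [LieRing L'] [AddCommGroup N']
    [LieRingModule L' N'] (g : A ⊗[R] L →+ L') (f : A ⊗[R] M →+ N')
    (h : ∀ a x b m, f ⁅a ⊗ₜ[R] x, b ⊗ₜ[R] m⁆ = ⁅g (a ⊗ₜ x), f (b ⊗ₜ m)⁆)
    (x : A ⊗[R] L) (m : A ⊗[R] M) : f ⁅x, m⁆ = ⁅g x, f m⁆ := by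
  induction x with
  | zero => rw [map_zero, zero_lie, ← map_zero f]; exact congrArg f (zero_lie m)
  | add x y hx hy =>
    rw [map_add, add_lie, ← hx, ← hy, ← map_add]
    exact congrArg f (add_lie x y m)
  | tmul a x =>
    induction m with
    | zero => simp only [lie_zero, map_zero]
    | add m n hm hn => simp only [lie_add, map_add, hm, hn]
    | tmul b m => exact h a x b m

variable (A) in
/-- The extension of scalars `id ⊗ f` of a homomorphism `f` of Lie modules. -/
def lieModuleHomBaseChange (f : M →ₗ⁅R,L⁆ N) : A ⊗[R] M →ₗ⁅A,A ⊗[R] L⁆ A ⊗[R] N :=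
  { (f : M →ₗ[R] N).baseChange A with
    map_lie' := fun {x m} =>
      map_lie_of_map_lie_tmul (AddMonoidHom.id _) ((f : M →ₗ[R] N).baseChange A).toAddMonoidHom
        (fun a x b m => by simp) x m }

theorem lieModuleHomBaseChange_surjective {f : M →ₗ⁅R,L⁆ N} (hf : Function.Surjective f) :
    Function.Surjective (lieModuleHomBaseChange A f) :=
  LinearMap.lTensor_surjective A hf

/-- The contraction `c ⊗ id : A ⊗ M → R ⊗ M = M` along a linear functional `c` on `A`. -/
def contractScalars (M : Type*) [AddCommGroup M] [Module R M] (c : A →ₗ[R] R) : A ⊗[R] M →ₗ[R] M :=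
  TensorProduct.lid R M ∘ₗ c.rTensor M

theorem contractScalars_tmul (c : A →ₗ[R] R) (a : A) (m : M) :
    contractScalars M c (a ⊗ₜ m) = c a • m := by
  simp [contractScalars]

theorem contractScalars_one_tmul_lie (c : A →ₗ[R] R) (x : L) (m : A ⊗[R] M) :
    contractScalars M c ⁅(1 : A) ⊗ₜ[R] x, m⁆ = ⁅x, contractScalars M c m⁆ := by
  induction m with
  | zero => simp
  | add m n hm hn => simp only [lie_add, map_add, hm, hn]
  | tmul a m => simp [contractScalars_tmul]

theorem exists_contractScalars_ne_zero [Module.Free R A] {m : A ⊗[R] M} (hm : m ≠ 0) :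
    ∃ c : A →ₗ[R] R, contractScalars M c m ≠ 0 := by
  classical
  let b := Module.Free.chooseBasis R A
  contrapose! hm
  refine (TensorProduct.equivFinsuppOfBasisLeft b).map_eq_zero_iff.1 (Finsupp.ext fun i => ?_)
  rw [TensorProduct.equivFinsuppOfBasisLeft_apply]
  exact hm (b.coord i)

/-- The homomorphism `M → N` obtained from one between base changes by restricting it to
`1 ⊗ M` and contracting its values along `c`. -/
def contractHom (c : A →ₗ[R] R) (f : A ⊗[R] M →ₗ⁅A,A ⊗[R] L⁆ A ⊗[R] N) : M →ₗ⁅R,L⁆ N :=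
  { contractScalars N c ∘ₗ (f : A ⊗[R] M →ₗ[A] A ⊗[R] N).restrictScalars R ∘ₗ
      TensorProduct.mk R A M 1 with
    map_lie' := fun {x m} => by
      change contractScalars N c (f (1 ⊗ₜ ⁅x, m⁆)) = ⁅x, contractScalars N c (f (1 ⊗ₜ m))⁆
      rw [← contractScalars_one_tmul_lie, ← LieModuleHom.map_lie,
        LieAlgebra.ExtendScalars.bracket_tmul, mul_one] }

theorem exists_contractHom_ne_zero [Module.Free R A]
    {f : A ⊗[R] M →ₗ⁅A,A ⊗[R] L⁆ A ⊗[R] N} (hf : f ≠ 0) :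
    ∃ c : A →ₗ[R] R, contractHom c f ≠ 0 := by
  obtain ⟨m, hm⟩ : ∃ m : M, f (1 ⊗ₜ m) ≠ 0 := by
    contrapose! hf
    have : (f : A ⊗[R] M →ₗ[A] A ⊗[R] N) = 0 := by
      ext m
      exact hf m
    exact LieModuleHom.ext (LinearMap.congr_fun this)
  obtain ⟨c, hc⟩ := exists_contractScalars_ne_zero hm
  exact ⟨c, fun h => hc (LieModuleHom.congr_fun h m)⟩

theorem nonempty_lieModuleEquiv_of_lieSubmodule_baseChange_equiv [Module.Free R A]
    [LieModule.IsIrreducible R L M] [LieModule.IsIrreducible R L N]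
    [ComplementedLattice (LieSubmodule A (A ⊗[R] L) (A ⊗[R] M))]
    {V : LieSubmodule A (A ⊗[R] L) (A ⊗[R] M)} (hV : V ≠ ⊥)
    {U : LieSubmodule A (A ⊗[R] L) (A ⊗[R] N)} (e : V ≃ₗ⁅A,A ⊗[R] L⁆ U) :
    Nonempty (M ≃ₗ⁅R,L⁆ N) := by
  obtain ⟨p, hp⟩ := exists_comp_incl_eq_id V
  let f := U.incl.comp ((e : V →ₗ⁅A,A ⊗[R] L⁆ U).comp p)
  have hf : f ≠ 0 := by
    have := (LieSubmodule.nontrivial_iff_ne_bot A (A ⊗[R] L) (A ⊗[R] M)).2 hV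
    obtain ⟨v, hv⟩ := exists_ne (0 : V)
    intro h
    apply hv
    apply e.injective
    apply U.injective_incl
    calc U.incl (e v) = f v := congrArg (fun v => U.incl (e v)) (LieModuleHom.congr_fun hp v).symm
      _ = 0 := by rw [h, LieModuleHom.zero_apply]
      _ = U.incl (e 0) := by rw [map_zero, map_zero]
  obtain ⟨c, hc⟩ := exists_contractHom_ne_zero hf
  exact nonempty_lieModuleEquiv_of_ne_zero hc

end BaseChange

section GaloisAction

variable {k F : Type*} [Field k] [Field F] [Algebra k F] {W : Type*} [AddCommGroup W] [Module k W]

theorem galMap_tmul (σ : F ≃ₐ[k] F) (a : F) (w : W) :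
    galMap k F σ W (a ⊗ₜ w) = σ a ⊗ₜ w :=
  rfl

theorem galMap_one (m : F ⊗[k] W) : galMap k F 1 W m = m :=
  LinearMap.congr_fun (LinearMap.rTensor_id W F) m

theorem galMap_mul (σ τ : F ≃ₐ[k] F) (m : F ⊗[k] W) :
    galMap k F (σ * τ) W m = galMap k F σ W (galMap k F τ W m) :=
  LinearMap.rTensor_comp_apply W σ.toLinearMap τ.toLinearMap m

theorem baseChange_repr_galMap {ι : Type*} (b : Module.Basis ι k W) (σ : F ≃ₐ[k] F)
    (m : F ⊗[k] W) (i : ι) :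
    (b.baseChange F).repr (galMap k F σ W m) i = σ ((b.baseChange F).repr m i) := by
  induction m with
  | zero => rw [map_zero (galMap k F σ W), map_zero, Finsupp.zero_apply, map_zero]
  | add m n hm hn => simp only [map_add, Finsupp.add_apply, hm, hn]
  | tmul a w => simp only [galMap_tmul, Module.Basis.baseChange_repr_tmul, map_smul]

theorem support_repr_galMap_sub_subset {ι : Type*} (b : Module.Basis ι k W) (σ : F ≃ₐ[k] F)
    (m : F ⊗[k] W) :
    ((b.baseChange F).repr (galMap k F σ W m - m)).support ⊆
      ((b.baseChange F).repr m).support := by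
  intro j
  rw [Finsupp.mem_support_iff, Finsupp.mem_support_iff]
  contrapose!
  intro hj
  rw [map_sub, Finsupp.sub_apply, baseChange_repr_galMap, hj, map_zero, sub_zero]

variable [Algebra.IsInvariant k F (F ≃ₐ[k] F)]

theorem exists_one_tmul_eq_of_galMap_eq {m : F ⊗[k] W}
    (hm : ∀ σ : F ≃ₐ[k] F, galMap k F σ W m = m) : ∃ w : W, (1 : F) ⊗ₜ[k] w = m := by
  let b := Module.Basis.ofVectorSpace k W
  have hcoord (i) : ∃ a : k, algebraMap k F a = (b.baseChange F).repr m i :=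
    Algebra.IsInvariant.isInvariant (G := F ≃ₐ[k] F) _ fun σ => by
      rw [AlgEquiv.smul_def, ← baseChange_repr_galMap, hm]
  choose a ha using hcoord
  use ∑ i ∈ ((b.baseChange F).repr m).support, a i • b i
  conv_rhs => rw [← (b.baseChange F).linearCombination_repr m,
    Finsupp.linearCombination_apply, Finsupp.sum]
  simp only [TensorProduct.tmul_sum, ← ha, algebraMap_smul, TensorProduct.tmul_smul,
    Module.Basis.baseChange_apply]

-- A nonzero vector of `U` of minimal support, scaled to have a coordinate equal to `1`, is fixed
-- by every `σ`: the difference with its image under `σ` lies in `U` and has smaller support.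
theorem exists_one_tmul_mem_of_galSub_le {U : Submodule F (F ⊗[k] W)}
    (hU : ∀ σ : F ≃ₐ[k] F, galSub k F σ U ≤ U) (hU0 : U ≠ ⊥) :
    ∃ w : W, w ≠ 0 ∧ (1 : F) ⊗ₜ[k] w ∈ U := by
  let b := Module.Basis.ofVectorSpace k W
  let B := b.baseChange F
  obtain ⟨m, ⟨hmU, hm0⟩, hmin⟩ := exists_minimalFor_of_wellFoundedLT
    (fun m : F ⊗[k] W => m ∈ U ∧ m ≠ 0) (fun m => (B.repr m).support)
    (U.exists_mem_ne_zero_of_ne_bot hU0)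
  obtain ⟨i, hi⟩ := Finsupp.ne_iff.1 (B.repr.map_eq_zero_iff.not.2 hm0)
  rw [Finsupp.zero_apply] at hi
  let n := (B.repr m i)⁻¹ • m
  have hnU : n ∈ U := U.smul_mem _ hmU
  have hni : B.repr n i = 1 := by
    rw [map_smul, Finsupp.smul_apply, smul_eq_mul, inv_mul_cancel₀ hi]
  have hnm : (B.repr n).support ⊆ (B.repr m).support := by
    rw [map_smul]
    exact Finsupp.support_smul
  have hfix (σ : F ≃ₐ[k] F) : galMap k F σ W n = n := by
    let d := galMap k F σ W n - n
    have hdU : d ∈ U := U.sub_mem (hU σ (Submodule.mem_map_of_mem hnU)) hnU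
    have hdi : B.repr d i = 0 := by
      rw [map_sub, Finsupp.sub_apply, baseChange_repr_galMap, hni, map_one, sub_self]
    refine sub_eq_zero.1 (by_contra fun hd0 => Finsupp.mem_support_iff.1 ?_ hdi)
    exact hmin ⟨hdU, hd0⟩ ((support_repr_galMap_sub_subset b σ n).trans hnm)
      (Finsupp.mem_support_iff.2 hi)
  obtain ⟨w, hw⟩ := exists_one_tmul_eq_of_galMap_eq hfix
  refine ⟨w, fun hw0 => ?_, hw ▸ hnU⟩
  rw [← hw, hw0, TensorProduct.tmul_zero, map_zero] at hni
  exact zero_ne_one hni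

end GaloisAction

section GaloisConjugate

variable {k F : Type*} [Field k] [Field F] [Algebra k F]
  {𝔤 : Type*} [LieRing 𝔤] [LieAlgebra k 𝔤]
  {W : Type*} [AddCommGroup W] [Module k W] [LieRingModule 𝔤 W] [LieModule k 𝔤 W]

theorem galMap_lie (σ : F ≃ₐ[k] F) (x : F ⊗[k] 𝔤) (m : F ⊗[k] W) :
    galMap k F σ W ⁅x, m⁆ = ⁅galMap k F σ 𝔤 x, galMap k F σ W m⁆ :=
  map_lie_of_map_lie_tmul (galMap k F σ 𝔤).toAddMonoidHom (galMap k F σ W).toAddMonoidHom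
    (fun a x b m => by
      change galMap k F σ W ⁅a ⊗ₜ x, b ⊗ₜ m⁆ = ⁅galMap k F σ 𝔤 (a ⊗ₜ x), galMap k F σ W (b ⊗ₜ m)⁆
      simp only [LieAlgebra.ExtendScalars.bracket_tmul, galMap_tmul, map_mul]) x m

/-- The Galois conjugate `σ(V)` of a Lie submodule `V` of `F ⊗ W`, as a Lie submodule; its
underlying subspace is `galSub k F σ V`. -/
noncomputable def galConj (σ : F ≃ₐ[k] F) (V : LieSubmodule F (F ⊗[k] 𝔤) (F ⊗[k] W)) :
    LieSubmodule F (F ⊗[k] 𝔤) (F ⊗[k] W) :=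
  { galSub k F σ (V : Submodule F (F ⊗[k] W)) with
    lie_mem := by
      rintro x _ ⟨m, hm, rfl⟩
      refine ⟨⁅galMap k F σ⁻¹ 𝔤 x, m⁆, V.lie_mem hm, ?_⟩
      rw [galMap_lie, ← galMap_mul, mul_inv_cancel, galMap_one] }

theorem mem_galConj {σ : F ≃ₐ[k] F} {V : LieSubmodule F (F ⊗[k] 𝔤) (F ⊗[k] W)}
    {m : F ⊗[k] W} : m ∈ galConj σ V ↔ galMap k F σ⁻¹ W m ∈ V := by
  constructor
  · rintro ⟨n, hn, rfl⟩
    rwa [← galMap_mul, inv_mul_cancel, galMap_one]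
  · intro hm
    exact ⟨_, hm, by rw [← galMap_mul, mul_inv_cancel, galMap_one]⟩

theorem galConj_one (V : LieSubmodule F (F ⊗[k] 𝔤) (F ⊗[k] W)) : galConj 1 V = V := by
  ext m
  rw [mem_galConj, inv_one, galMap_one]

theorem galConj_mul (σ τ : F ≃ₐ[k] F) (V : LieSubmodule F (F ⊗[k] 𝔤) (F ⊗[k] W)) :
    galConj (σ * τ) V = galConj σ (galConj τ V) := by
  ext m
  rw [mem_galConj, mem_galConj, mem_galConj, mul_inv_rev, galMap_mul]

theorem galConj_mono (σ : F ≃ₐ[k] F) :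
    Monotone (galConj σ : LieSubmodule F (F ⊗[k] 𝔤) (F ⊗[k] W) → _) :=
  fun _ _ hVU _ hm => mem_galConj.2 (hVU (mem_galConj.1 hm))

/-- Galois conjugation by `σ` as an automorphism of the lattice of Lie submodules of `F ⊗ W`. -/
noncomputable def galConjOrderIso (σ : F ≃ₐ[k] F) :
    LieSubmodule F (F ⊗[k] 𝔤) (F ⊗[k] W) ≃o LieSubmodule F (F ⊗[k] 𝔤) (F ⊗[k] W) :=
  Equiv.toOrderIso
    { toFun := galConj σ
      invFun := galConj σ⁻¹
      left_inv := fun V => by rw [← galConj_mul, inv_mul_cancel, galConj_one]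
      right_inv := fun V => by rw [← galConj_mul, mul_inv_cancel, galConj_one] }
    (galConj_mono σ) (galConj_mono σ⁻¹)

theorem isAtom_galConj (σ : F ≃ₐ[k] F) {V : LieSubmodule F (F ⊗[k] 𝔤) (F ⊗[k] W)}
    (hV : IsAtom V) : IsAtom (galConj σ V) :=
  ((galConjOrderIso σ).isAtom_iff V).2 hV

theorem galConj_iSup {ι : Sort*} (σ : F ≃ₐ[k] F)
    (V : ι → LieSubmodule F (F ⊗[k] 𝔤) (F ⊗[k] W)) :
    galConj σ (⨆ i, V i) = ⨆ i, galConj σ (V i) :=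
  (galConjOrderIso σ).map_iSup V

variable {W₁ W₂ : Type*}
  [AddCommGroup W₁] [Module k W₁] [LieRingModule 𝔤 W₁] [LieModule k 𝔤 W₁]
  [AddCommGroup W₂] [Module k W₂] [LieRingModule 𝔤 W₂] [LieModule k 𝔤 W₂]

theorem galConjIso_iff {σ τ : F ≃ₐ[k] F} {Vα : LieSubmodule F (F ⊗[k] 𝔤) (F ⊗[k] W₁)}
    {Vβ : LieSubmodule F (F ⊗[k] 𝔤) (F ⊗[k] W₂)} :
    GalConjIso k F 𝔤 σ τ Vα Vβ ↔
      Nonempty (galConj σ Vα ≃ₗ⁅F,F ⊗[k] 𝔤⁆ galConj τ Vβ) := by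
  constructor
  · rintro ⟨Vα', Vβ', hα, hβ, e⟩
    obtain rfl : Vα' = galConj σ Vα := LieSubmodule.toSubmodule_injective hα
    obtain rfl : Vβ' = galConj τ Vβ := LieSubmodule.toSubmodule_injective hβ
    exact e
  · exact fun e => ⟨galConj σ Vα, galConj τ Vβ, rfl, rfl, e⟩

variable [Algebra.IsInvariant k F (F ≃ₐ[k] F)] [LieModule.IsIrreducible k 𝔤 W]

theorem eq_top_of_galConj_le {U : LieSubmodule F (F ⊗[k] 𝔤) (F ⊗[k] W)}
    (hU : ∀ σ : F ≃ₐ[k] F, galConj σ U ≤ U) (hU0 : U ≠ ⊥) : U = ⊤ := by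
  let P : LieSubmodule k 𝔤 W :=
    { ((U : Submodule F (F ⊗[k] W)).restrictScalars k).comap (TensorProduct.mk k F W 1) with
      lie_mem := fun {x w} hw => by
        have := U.lie_mem (x := (1 : F) ⊗ₜ[k] x) hw
        rwa [TensorProduct.mk_apply, LieAlgebra.ExtendScalars.bracket_tmul, mul_one] at this }
  have hP : P ≠ ⊥ := by
    obtain ⟨w, hw0, hwU⟩ := exists_one_tmul_mem_of_galSub_le
      (U := (U : Submodule F (F ⊗[k] W))) hU ((LieSubmodule.toSubmodule_eq_bot U).not.2 hU0)
    exact fun h => hw0 ((LieSubmodule.eq_bot_iff P).1 h w hwU)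
  have hPU : P.baseChange F ≤ U := by
    rw [← LieSubmodule.toSubmodule_le_toSubmodule, LieSubmodule.coe_baseChange,
      Submodule.baseChange_eq_span, Submodule.span_le]
    rintro _ ⟨w, hw, rfl⟩
    exact hw
  rwa [(eq_bot_or_eq_top P).resolve_left hP, LieSubmodule.baseChange_top, top_le_iff] at hPU

theorem iSup_galConj_eq_top {V : LieSubmodule F (F ⊗[k] 𝔤) (F ⊗[k] W)} (hV : V ≠ ⊥) :
    ⨆ σ : F ≃ₐ[k] F, galConj σ V = ⊤ := by
  refine eq_top_of_galConj_le (fun σ => ?_) fun h => hV ?_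
  · simp only [galConj_iSup, ← galConj_mul]
    exact iSup_le fun τ => le_iSup (fun ρ => galConj ρ V) (σ * τ)
  · rw [← galConj_one V]
    exact iSup_eq_bot.1 h 1

theorem complementedLattice_baseChange_of_isAtom {V : LieSubmodule F (F ⊗[k] 𝔤) (F ⊗[k] W)}
    (hV : IsAtom V) : ComplementedLattice (LieSubmodule F (F ⊗[k] 𝔤) (F ⊗[k] W)) := by
  refine complementedLattice_of_sSup_atoms_eq_top (top_le_iff.1 ?_)
  rw [← iSup_galConj_eq_top hV.1]
  exact iSup_le fun σ => le_sSup (isAtom_galConj σ hV)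

theorem exists_nonempty_galConj_equiv_of_surjective [LieModule.IsIrreducible k 𝔤 W₁]
    [ComplementedLattice (LieSubmodule F (F ⊗[k] 𝔤) (F ⊗[k] W₂))]
    {f : F ⊗[k] W₁ →ₗ⁅F,F ⊗[k] 𝔤⁆ F ⊗[k] W₂} (hf : Function.Surjective f)
    {V : LieSubmodule F (F ⊗[k] 𝔤) (F ⊗[k] W₁)} (hV : IsAtom V)
    {U : LieSubmodule F (F ⊗[k] 𝔤) (F ⊗[k] W₂)} (hU : IsAtom U) :
    ∃ σ : F ≃ₐ[k] F, Nonempty (galConj σ V ≃ₗ⁅F,F ⊗[k] 𝔤⁆ U) := by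
  obtain ⟨p, hp⟩ := exists_comp_incl_eq_id U
  have := lieModule_isIrreducible_of_isAtom hU
  have hpf : p.comp f ≠ 0 := by
    have := (LieSubmodule.nontrivial_iff_ne_bot F (F ⊗[k] 𝔤) (F ⊗[k] W₂)).2 hU.1
    obtain ⟨u, hu⟩ := exists_ne (0 : U)
    obtain ⟨m, hm⟩ := hf u
    intro h
    apply hu
    calc u = p u := (LieModuleHom.congr_fun hp u).symm
      _ = p.comp f m := by rw [LieModuleHom.comp_apply, hm]
      _ = 0 := by rw [h, LieModuleHom.zero_apply]
  obtain ⟨σ, hσ⟩ := exists_comp_incl_ne_zero (iSup_galConj_eq_top hV.1) hpf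
  have := lieModule_isIrreducible_of_isAtom (isAtom_galConj σ hV)
  exact ⟨σ, nonempty_lieModuleEquiv_of_ne_zero hσ⟩

end GaloisConjugate

theorem stmt0_general
    (k F : Type*) [Field k] [Field F] [Algebra k F] [Algebra.IsInvariant k F (F ≃ₐ[k] F)]
    (𝔤 : Type*) [LieRing 𝔤] [LieAlgebra k 𝔤]
    (W₁ W₂ : Type*)
    [AddCommGroup W₁] [Module k W₁] [LieRingModule 𝔤 W₁] [LieModule k 𝔤 W₁]
    [AddCommGroup W₂] [Module k W₂] [LieRingModule 𝔤 W₂] [LieModule k 𝔤 W₂]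
    (hW₁ : LieModule.IsIrreducible k 𝔤 W₁) (hW₂ : LieModule.IsIrreducible k 𝔤 W₂)
    (Vα : LieSubmodule F (F ⊗[k] 𝔤) (F ⊗[k] W₁)) (hVα : IsAtom Vα)
    (Vβ : LieSubmodule F (F ⊗[k] 𝔤) (F ⊗[k] W₂)) (hVβ : IsAtom Vβ) :
    Nonempty (W₁ ≃ₗ⁅k,𝔤⁆ W₂) ↔
      ∃ σ τ : F ≃ₐ[k] F, GalConjIso k F 𝔤 σ τ Vα Vβ := by
  have := complementedLattice_baseChange_of_isAtom hVα
  have := complementedLattice_baseChange_of_isAtom hVβ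
  simp only [galConjIso_iff]
  constructor
  · rintro ⟨φ⟩
    obtain ⟨σ, hσ⟩ := exists_nonempty_galConj_equiv_of_surjective
      (lieModuleHomBaseChange_surjective (f := φ) φ.surjective) hVα hVβ
    exact ⟨σ, 1, (galConj_one Vβ).symm ▸ hσ⟩
  · rintro ⟨σ, τ, ⟨e⟩⟩
    exact nonempty_lieModuleEquiv_of_lieSubmodule_baseChange_equiv (isAtom_galConj σ hVα).1 e

/-- Two finite-dimensional irreducible `𝔤`-modules over `k`, whose base
changes to `F` are semisimple, are isomorphic iff some Galois conjugates of irreducible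
constituents of their base changes are isomorphic. -/
theorem stmt0
    (k F : Type*) [Field k] [Field F] [Algebra k F] [FiniteDimensional k F] [IsGalois k F]
    (𝔤 : Type*) [LieRing 𝔤] [LieAlgebra k 𝔤] [Module.Finite k 𝔤]
    (W₁ W₂ : Type*)
    [AddCommGroup W₁] [Module k W₁] [LieRingModule 𝔤 W₁] [LieModule k 𝔤 W₁] [Module.Finite k W₁]
    [AddCommGroup W₂] [Module k W₂] [LieRingModule 𝔤 W₂] [LieModule k 𝔤 W₂] [Module.Finite k W₂]
    (hW₁ : LieModule.IsIrreducible k 𝔤 W₁) (hW₂ : LieModule.IsIrreducible k 𝔤 W₂)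
    (hss₁ : IsSemisimpleLieModule F (F ⊗[k] 𝔤) (F ⊗[k] W₁))
    (hss₂ : IsSemisimpleLieModule F (F ⊗[k] 𝔤) (F ⊗[k] W₂))
    (Vα : LieSubmodule F (F ⊗[k] 𝔤) (F ⊗[k] W₁)) (hVα : IsAtom Vα)
    (Vβ : LieSubmodule F (F ⊗[k] 𝔤) (F ⊗[k] W₂)) (hVβ : IsAtom Vβ) :
    Nonempty (W₁ ≃ₗ⁅k, 𝔤⁆ W₂) ↔
      ∃ σ τ : F ≃ₐ[k] F, GalConjIso k F 𝔤 σ τ Vα Vβ :=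
  stmt0_general k F 𝔤 W₁ W₂ hW₁ hW₂ Vα hVα Vβ hVβ
end

section
/- Suppose g, h₁, h₂, h₃ ∈ Gal(F/ℚ) satisfy: g(z₁) = z₂, g(z₂) = z₃, g(z₃) = z₁; and for each i, hᵢ(zᵢ) = −zᵢ while hᵢ(z_j) = z_j for j ≠ i. Then the fixed field of the subgroup of Gal(F/ℚ) generated by g, h₁h₂ and h₂h₃ is ℚ(i) = ℚ(√−1), a quadratic extension of ℚ. -/
/-!
Let `K` be the base field, `w = z₁z₂z₃` and `H = ⟨g, h₁h₂, h₂h₃⟩`. Both `h₁h₂` and `h₂h₃` change two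
signs in `w`, and `g` permutes its factors, so `K(w)` lies in the fixed field of `H`; equality
follows by counting degrees. On one side `[F : K(w)] ≤ 12`: the square of `z₁` is a root of a cubic,
the square of `z₂` lies in `K(z₁)`, and `z₃ = w / (z₁z₂)`. On the other side `|H| ≥ 12`: the
`H`-orbit of `z₁` contains the six elements `±z₁, ±z₂, ±z₃`, and `h₂h₃` is a nontrivial element of
its stabilizer. Finally `w² = ρ · 1/(1 - ρ) · (1 - 1/ρ) = -1`, so `w = ±i`.

Nothing here is special to `X³ - 3X + 1`: the argument applies to every member of Shanks' family of
simplest cubics, over any field in which `-1` is not a square.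
-/

open IntermediateField Module Polynomial

theorem ncard_insert_neg_insert_neg_pair_neg {M : Type*} [InvolutiveNeg M] {x y z : M} (hx : x ≠ -x)
    (hy : y ≠ -y) (hz : z ≠ -z) (hxy : x ≠ y) (hxy' : x ≠ -y) (hxz : x ≠ z) (hxz' : x ≠ -z)
    (hyz : y ≠ z) (hyz' : y ≠ -z) : ({x, -x, y, -y, z, -z} : Set M).ncard = 6 := by
  classical
  simp [Set.ncard_eq_toFinset_card', Finset.card_insert_of_notMem, neg_eq_iff_eq_neg, *]

theorem ne_and_ne_neg_of_smul_eq_of_smul_eq_neg {G M : Type*} [Monoid G] [AddGroup M]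
    [DistribMulAction G M] {σ : G} {x y : M} (hx : σ • x = x) (hy : σ • y = -y) (hne : y ≠ -y) :
    x ≠ y ∧ x ≠ -y := by
  constructor <;> rintro rfl
  · exact hne (hx.symm.trans hy)
  · rw [smul_neg, hy, neg_neg] at hx
    exact hne hx

theorem twelve_le_card_of_smul_eq_neg {G M : Type*} [Group G] [Finite G] [AddGroup M]
    [DistribMulAction G M] {z₁ z₂ z₃ : M} (hz : z₁ ≠ -z₁) {g p q : G}
    (hg₁ : g • z₁ = z₂) (hg₂ : g • z₂ = z₃)
    (hp₁ : p • z₁ = -z₁) (hp₂ : p • z₂ = -z₂) (hp₃ : p • z₃ = z₃)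
    (hq₁ : q • z₁ = z₁) (hq₂ : q • z₂ = -z₂) (hq₃ : q • z₃ = -z₃) :
    12 ≤ Nat.card G := by
  have hz₂ : z₂ ≠ -z₂ := by
    rw [← hg₁, ← smul_neg]
    exact (MulAction.injective g).ne hz
  have hz₃ : z₃ ≠ -z₃ := by
    rw [← hg₂, ← smul_neg]
    exact (MulAction.injective g).ne hz₂
  obtain ⟨h₁₂, h₁₂'⟩ := ne_and_ne_neg_of_smul_eq_of_smul_eq_neg hq₁ hq₂ hz₂
  obtain ⟨h₁₃, h₁₃'⟩ := ne_and_ne_neg_of_smul_eq_of_smul_eq_neg hq₁ hq₃ hz₃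
  obtain ⟨h₂₃, h₂₃'⟩ := ne_and_ne_neg_of_smul_eq_of_smul_eq_neg hp₃ hp₂ hz₂
  have horbit : 6 ≤ (MulAction.stabilizer G z₁).index := by
    have hsub : ({z₁, -z₁, z₂, -z₂, z₃, -z₃} : Set M) ⊆ MulAction.orbit G z₁ := by
      rintro x (rfl | rfl | rfl | rfl | rfl | rfl)
      exacts [⟨1, one_smul _ _⟩, ⟨p, hp₁⟩, ⟨g, hg₁⟩, ⟨p * g, by simp [mul_smul, *]⟩,
        ⟨g * g, by simp [mul_smul, *]⟩, ⟨q * g * g, by simp [mul_smul, *]⟩]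
    rw [MulAction.index_stabilizer, ← ncard_insert_neg_insert_neg_pair_neg hz hz₂ hz₃ h₁₂ h₁₂' h₁₃
      h₁₃' h₂₃.symm fun h ↦ h₂₃' (neg_eq_iff_eq_neg.2 h).symm]
    exact Set.ncard_le_ncard hsub (Set.finite_range _)
  have hstab : 2 ≤ Nat.card (MulAction.stabilizer G z₁) := by
    have : Nontrivial (MulAction.stabilizer G z₁) := by
      refine ⟨⟨q, hq₁⟩, 1, fun h ↦ hz₂ ?_⟩
      have hq : q = 1 := congrArg Subtype.val h
      rw [← hq₂, hq, one_smul]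
    exact Finite.one_lt_card
  rw [← Subgroup.card_mul_index (MulAction.stabilizer G z₁)]
  exact Nat.mul_le_mul hstab horbit

section

variable {K L : Type*} [Field K] [Field L] [Algebra K L]

theorem mem_fixedField_closure_iff {S : Set Gal(L/K)} {x : L} :
    x ∈ fixedField (Subgroup.closure S) ↔ ∀ σ ∈ S, σ x = x := by
  rw [mem_fixedField_iff]
  exact Subgroup.closure_le (K := MulAction.stabilizer Gal(L/K) x)

theorem finrank_adjoin_simple_le_natDegree {f : K[X]} (hf : f ≠ 0) {x : L}
    (hx : aeval x f = 0) : finrank K K⟮x⟯ ≤ f.natDegree := by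
  have hint : IsIntegral K x := IsAlgebraic.isIntegral ⟨f, hf, hx⟩
  rw [adjoin.finrank hint]
  exact natDegree_le_of_dvd (minpoly.dvd K x hx) hf

theorem finrank_le_two_of_sq_mem {M : IntermediateField K L} {y : L} (hy : y ^ 2 ∈ M)
    (htop : M⟮y⟯ = ⊤) : finrank M L ≤ 2 := by
  have hroot : aeval y (X ^ 2 - C (⟨y ^ 2, hy⟩ : M)) = 0 := by simp
  have := finrank_adjoin_simple_le_natDegree (X_pow_sub_C_ne_zero two_pos _) hroot
  rwa [htop, finrank_top', natDegree_X_pow_sub_C] at this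

theorem finrank_le_natDegree_mul_two {f : K[X]} (hf : f ≠ 0) {x y : L} (hx : aeval x f = 0)
    (hy : y ^ 2 ∈ K⟮x⟯) (htop : K⟮x, y⟯ = ⊤) : finrank K L ≤ f.natDegree * 2 := by
  rw [← adjoin_simple_adjoin_simple, restrictScalars_eq_top_iff] at htop
  rw [← finrank_mul_finrank K K⟮x⟯ L]
  exact Nat.mul_le_mul (finrank_adjoin_simple_le_natDegree hf hx)
    (finrank_le_two_of_sq_mem hy htop)

theorem finrank_le_four_mul_natDegree {f : K[X]} (hf : f ≠ 0) {z₁ z₂ z₃ : L} {w : K}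
    (hroot : aeval (z₁ ^ 2) f = 0) (hsq : z₂ ^ 2 ∈ K⟮z₁⟯) (hz : z₁ * z₂ ≠ 0)
    (hw : z₁ * z₂ * z₃ = algebraMap K L w) (htop : K⟮z₁, z₂, z₃⟯ = ⊤) :
    finrank K L ≤ 4 * f.natDegree := by
  have hz₃ : z₃ ∈ K⟮z₁, z₂⟯ := by
    rw [eq_div_of_mul_eq hz ((mul_comm _ _).trans hw)]
    exact div_mem (IntermediateField.algebraMap_mem _ w)
      (mul_mem (subset_adjoin _ _ (by simp)) (subset_adjoin _ _ (by simp)))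
  have htop₂ : K⟮z₁, z₂⟯ = ⊤ := by
    rw [eq_top_iff, ← htop, adjoin_le_iff]
    rintro x (rfl | rfl | rfl)
    exacts [subset_adjoin _ _ (by simp), subset_adjoin _ _ (by simp), hz₃]
  have := finrank_le_natDegree_mul_two ((expand_ne_zero two_pos).2 hf)
    ((expand_aeval 2 f z₁).trans hroot) hsq htop₂
  rw [natDegree_expand] at this
  lia

theorem finrank_adjoin_mul_le_four_mul_natDegree {f : K[X]} (hf : f ≠ 0) {z₁ z₂ z₃ : L}
    (hroot : aeval (z₁ ^ 2) f = 0) (hsq : z₂ ^ 2 ∈ K⟮z₁⟯) (hz : z₁ * z₂ ≠ 0)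
    (htop : K⟮z₁, z₂, z₃⟯ = ⊤) :
    finrank K⟮z₁ * z₂ * z₃⟯ L ≤ 4 * f.natDegree := by
  set M := K⟮z₁ * z₂ * z₃⟯
  have hle : K⟮z₁⟯ ≤ M⟮z₁⟯.restrictScalars K := by
    rw [adjoin_simple_le_iff]
    exact mem_adjoin_simple_self M z₁
  rw [← natDegree_map (algebraMap K M)]
  exact finrank_le_four_mul_natDegree (w := AdjoinSimple.gen K (z₁ * z₂ * z₃)) (map_ne_zero hf)
    (by rwa [aeval_map_algebraMap]) (hle hsq) hz rfl (adjoin_eq_top_of_adjoin_eq_top K htop)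

theorem fixedField_closure_eq_adjoin_mul {f : K[X]} (hf : f ≠ 0) (hdeg : f.natDegree ≤ 3)
    {z₁ z₂ z₃ : L} (hroot : aeval (z₁ ^ 2) f = 0) (hsq : z₂ ^ 2 ∈ K⟮z₁⟯) (hz : z₁ ≠ -z₁)
    (htop : K⟮z₁, z₂, z₃⟯ = ⊤) {g p q : Gal(L/K)}
    (hg₁ : g z₁ = z₂) (hg₂ : g z₂ = z₃) (hg₃ : g z₃ = z₁)
    (hp₁ : p z₁ = -z₁) (hp₂ : p z₂ = -z₂) (hp₃ : p z₃ = z₃)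
    (hq₁ : q z₁ = z₁) (hq₂ : q z₂ = -z₂) (hq₃ : q z₃ = -z₃) :
    fixedField (Subgroup.closure {g, p, q}) = K⟮z₁ * z₂ * z₃⟯ := by
  have hint₁ : IsIntegral K z₁ :=
    .of_pow two_pos (IsAlgebraic.isIntegral ⟨f, hf, hroot⟩)
  have hint₂ : IsIntegral K z₂ := hg₁ ▸ hint₁.map g
  have hint₃ : IsIntegral K z₃ := hg₂ ▸ hint₂.map g
  have : FiniteDimensional K L := by
    have : FiniteDimensional K K⟮z₁, z₂, z₃⟯ := finiteDimensional_adjoin (by simp [*])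
    rw [htop] at this
    exact topEquiv.toLinearEquiv.finiteDimensional
  have hle : K⟮z₁ * z₂ * z₃⟯ ≤ fixedField (Subgroup.closure {g, p, q}) := by
    rw [adjoin_simple_le_iff, mem_fixedField_closure_iff]
    rintro σ (rfl | rfl | rfl) <;> simp only [map_mul, *] <;> ring
  have hmul : z₁ * z₂ ≠ 0 := by
    have : z₁ ≠ 0 := fun h ↦ hz (by simp [h])
    simp [← hg₁, this]
  have hupper : finrank K⟮z₁ * z₂ * z₃⟯ L ≤ 12 :=
    (finrank_adjoin_mul_le_four_mul_natDegree hf hroot hsq hmul htop).trans (by lia)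
  have hlower : 12 ≤ finrank (fixedField (Subgroup.closure {g, p, q})) L := by
    rw [finrank_fixedField_eq_card]
    let gen (σ : Gal(L/K)) (hσ : σ ∈ ({g, p, q} : Set Gal(L/K))) :
        Subgroup.closure {g, p, q} := ⟨σ, Subgroup.subset_closure hσ⟩
    exact twelve_le_card_of_smul_eq_neg hz (g := gen g (by simp)) (p := gen p (by simp))
      (q := gen q (by simp)) hg₁ hg₂ hp₁ hp₂ hp₃ hq₁ hq₂ hq₃
  exact (eq_of_le_of_finrank_le' hle (hupper.trans hlower)).symm

theorem adjoin_simple_eq_of_sq_eq_sq {x y : L} (h : x ^ 2 = y ^ 2) : K⟮x⟯ = K⟮y⟯ := by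
  obtain rfl | rfl := sq_eq_sq_iff_eq_or_eq_neg.1 h
  · rfl
  · apply le_antisymm <;> rw [adjoin_simple_le_iff]
    exacts [neg_mem (mem_adjoin_simple_self K y), neg_mem_iff.1 (mem_adjoin_simple_self K (-y))]

theorem finrank_adjoin_simple_of_sq_eq {a : K} (ha : ¬IsSquare a) {x : L}
    (hx : x ^ 2 = algebraMap K L a) : finrank K K⟮x⟯ = 2 := by
  have hroot : aeval x (X ^ 2 - C a) = 0 := by simp [hx]
  have hirr : Irreducible (X ^ 2 - C a) :=
    (X_pow_sub_C_irreducible_iff_of_prime Nat.prime_two).2 fun b hb ↦ ha ⟨b, by rw [← hb, sq]⟩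
  have hint : IsIntegral K x := ⟨_, monic_X_pow_sub_C a two_ne_zero, hroot⟩
  rw [adjoin.finrank hint, ← minpoly.eq_of_irreducible_of_monic hirr hroot
    (monic_X_pow_sub_C a two_ne_zero), natDegree_X_pow_sub_C]

end

section

variable {R A : Type*} [CommRing R] [CommRing A] [Nontrivial A] [Algebra R A]

/-- Shanks' simplest cubic with parameter `a`. The map `x ↦ 1 / (1 - x)` permutes its roots
cyclically; `a = 0` gives `X ^ 3 - 3 * X + 1`. -/
noncomputable def simplestCubic (a : R) : R[X] :=
  X ^ 3 - C a * X ^ 2 + C (a - 3) * X + 1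

theorem natDegree_simplestCubic [Nontrivial R] (a : R) : (simplestCubic a).natDegree = 3 := by
  unfold simplestCubic
  compute_degree!

theorem simplestCubic_ne_zero [Nontrivial R] (a : R) : simplestCubic a ≠ 0 :=
  ne_zero_of_natDegree_gt (n := 0) (by simp [natDegree_simplestCubic])

theorem ne_zero_of_aeval_simplestCubic {a : R} {x : A} (hx : aeval x (simplestCubic a) = 0) :
    x ≠ 0 := by
  rintro rfl
  simp [simplestCubic] at hx

theorem ne_one_of_aeval_simplestCubic {a : R} {x : A} (hx : aeval x (simplestCubic a) = 0) :
    x ≠ 1 := by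
  rintro rfl
  have : -algebraMap R A 1 = 0 := by
    rw [← hx]
    simp only [simplestCubic, map_add, map_sub, map_mul, map_pow, aeval_X, aeval_C, map_one,
      map_ofNat]
    ring
  simp at this

end

section

variable {K L : Type*} [Field K] [Field L] [Algebra K L]

theorem mul_one_div_one_sub_mul_one_sub_one_div {x : L} (hx₀ : x ≠ 0) (hx₁ : x ≠ 1) :
    x * (1 / (1 - x)) * (1 - 1 / x) = -1 := by
  have : 1 - x ≠ 0 := sub_ne_zero.2 hx₁.symm
  field_simp
  ring

theorem fixedField_closure_eq_adjoin_mul_of_aeval_simplestCubic (htwo : (2 : K) ≠ 0) {a : K}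
    {z₁ z₂ z₃ : L} (hroot : aeval (z₁ ^ 2) (simplestCubic a) = 0) (hz₂ : z₂ ^ 2 = 1 / (1 - z₁ ^ 2))
    (htop : K⟮z₁, z₂, z₃⟯ = ⊤) {g h₁ h₂ h₃ : Gal(L/K)}
    (hg₁ : g z₁ = z₂) (hg₂ : g z₂ = z₃) (hg₃ : g z₃ = z₁)
    (hh₁₁ : h₁ z₁ = -z₁) (hh₁₂ : h₁ z₂ = z₂) (hh₁₃ : h₁ z₃ = z₃)
    (hh₂₁ : h₂ z₁ = z₁) (hh₂₂ : h₂ z₂ = -z₂) (hh₂₃ : h₂ z₃ = z₃)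
    (hh₃₁ : h₃ z₁ = z₁) (hh₃₂ : h₃ z₂ = z₂) (hh₃₃ : h₃ z₃ = -z₃) :
    fixedField (Subgroup.closure {g, h₁ * h₂, h₂ * h₃}) = K⟮z₁ * z₂ * z₃⟯ := by
  have hsq : z₂ ^ 2 ∈ K⟮z₁⟯ := by
    rw [hz₂]
    exact div_mem (one_mem _) (sub_mem (one_mem _) (pow_mem (mem_adjoin_simple_self K z₁) 2))
  have hz₁ : z₁ ≠ 0 := by
    simpa using ne_zero_of_aeval_simplestCubic hroot
  have htwo' : (2 : L) ≠ 0 := by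
    simpa only [map_ofNat] using (map_ne_zero (algebraMap K L)).2 htwo
  have hneg : z₁ ≠ -z₁ := by
    rw [Ne, eq_neg_iff_add_eq_zero, ← two_mul]
    exact mul_ne_zero htwo' hz₁
  apply fixedField_closure_eq_adjoin_mul (simplestCubic_ne_zero a) (natDegree_simplestCubic a).le
    hroot hsq hneg htop hg₁ hg₂ hg₃ <;> simp [AlgEquiv.mul_apply, *]

theorem stmt13_general {E : Type*} [Field E] [Algebra K E] (hK : ¬IsSquare (-1 : K)) {a : K}
    {ρ ρ₂ ρ₃ i : E} (hρ : aeval ρ (simplestCubic a) = 0)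
    (hρ₂ : ρ₂ = 1 / (1 - ρ)) (hρ₃ : ρ₃ = 1 - 1 / ρ) (hi : i ^ 2 = -1)
    {z₁ z₂ z₃ : E} (hz₁ : z₁ ^ 2 = ρ) (hz₂ : z₂ ^ 2 = ρ₂) (hz₃ : z₃ ^ 2 = ρ₃)
    {F : IntermediateField K E} (hF : F = K⟮z₁, z₂, z₃⟯)
    (hm₁ : z₁ ∈ F) (hm₂ : z₂ ∈ F) (hm₃ : z₃ ∈ F) {g h₁ h₂ h₃ : Gal(F/K)}
    (hg₁ : (g ⟨z₁, hm₁⟩ : E) = z₂) (hg₂ : (g ⟨z₂, hm₂⟩ : E) = z₃) (hg₃ : (g ⟨z₃, hm₃⟩ : E) = z₁)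
    (hh₁₁ : (h₁ ⟨z₁, hm₁⟩ : E) = -z₁) (hh₁₂ : (h₁ ⟨z₂, hm₂⟩ : E) = z₂)
    (hh₁₃ : (h₁ ⟨z₃, hm₃⟩ : E) = z₃)
    (hh₂₁ : (h₂ ⟨z₁, hm₁⟩ : E) = z₁) (hh₂₂ : (h₂ ⟨z₂, hm₂⟩ : E) = -z₂)
    (hh₂₃ : (h₂ ⟨z₃, hm₃⟩ : E) = z₃)
    (hh₃₁ : (h₃ ⟨z₁, hm₁⟩ : E) = z₁) (hh₃₂ : (h₃ ⟨z₂, hm₂⟩ : E) = z₂)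
    (hh₃₃ : (h₃ ⟨z₃, hm₃⟩ : E) = -z₃) :
    (fixedField (Subgroup.closure {g, h₁ * h₂, h₂ * h₃})).map F.val = K⟮i⟯ ∧
      finrank K K⟮i⟯ = 2 := by
  have hρ₀ : ρ ≠ 0 := ne_zero_of_aeval_simplestCubic hρ
  have hρ₁ : ρ ≠ 1 := ne_one_of_aeval_simplestCubic hρ
  have hw : (z₁ * z₂ * z₃) ^ 2 = i ^ 2 := by
    rw [mul_pow, mul_pow, hz₁, hz₂, hz₃, hρ₂, hρ₃, hi,
      mul_one_div_one_sub_mul_one_sub_one_div hρ₀ hρ₁]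
  have htwo : (2 : K) ≠ 0 := fun h ↦ hK ⟨1, by linear_combination -h⟩
  lift z₁ to F using hm₁
  lift z₂ to F using hm₂
  lift z₃ to F using hm₃
  norm_cast at hg₁ hg₂ hg₃ hh₁₁ hh₁₂ hh₁₃ hh₂₁ hh₂₂ hh₂₃ hh₃₁ hh₃₂ hh₃₃
  have htop : K⟮z₁, z₂, z₃⟯ = ⊤ := by
    apply lift_injective F
    rw [lift_adjoin, lift_top, Set.image_insert_eq, Set.image_pair]
    exact hF.symm
  have hroot : aeval (z₁ ^ 2) (simplestCubic a) = 0 := by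
    rw [← hz₁] at hρ
    exact F.val.injective (by simpa [← aeval_algHom_apply] using hρ)
  have hz₂' : z₂ ^ 2 = 1 / (1 - z₁ ^ 2) := by
    rw [← hz₁, ← hz₂] at hρ₂
    exact_mod_cast hρ₂
  have hfixed := fixedField_closure_eq_adjoin_mul_of_aeval_simplestCubic htwo hroot hz₂' htop
    hg₁ hg₂ hg₃ hh₁₁ hh₁₂ hh₁₃ hh₂₁ hh₂₂ hh₂₃ hh₃₁ hh₃₂ hh₃₃
  refine ⟨?_, finrank_adjoin_simple_of_sq_eq hK (hi.trans (by simp))⟩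
  calc (fixedField _).map F.val = lift K⟮z₁ * z₂ * z₃⟯ := congrArg lift hfixed
    _ = K⟮(z₁ * z₂ * z₃ : E)⟯ := lift_adjoin_simple ..
    _ = K⟮i⟯ := adjoin_simple_eq_of_sq_eq_sq hw

end

/-- For `g, h₁, h₂, h₃ ∈ Gal(F/ℚ)` acting on the square roots
`z₁, z₂, z₃` as specified, the fixed field of the subgroup generated by `g, h₁h₂, h₂h₃`
is `ℚ(i)`, a quadratic extension of `ℚ`. -/
theorem stmt13 (ρ ρ₂ ρ₃ : ℝ) (hρroot : ρ ^ 3 - 3 * ρ + 1 = 0) (hρneg : ρ < 0)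
    (hρ₂ : ρ₂ = 1 / (1 - ρ)) (hρ₃ : ρ₃ = 1 - 1 / ρ)
    (z₁ z₂ z₃ : ℂ) (hz₁ : z₁ ^ 2 = (ρ : ℂ)) (hz₂ : z₂ ^ 2 = (ρ₂ : ℂ)) (hz₃ : z₃ ^ 2 = (ρ₃ : ℂ))
    (F : IntermediateField ℚ ℂ) (hF : F = IntermediateField.adjoin ℚ {z₁, z₂, z₃})
    (hm₁ : z₁ ∈ F) (hm₂ : z₂ ∈ F) (hm₃ : z₃ ∈ F)
    (g h₁ h₂ h₃ : F ≃ₐ[ℚ] F)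
    (hg₁ : (g ⟨z₁, hm₁⟩ : ℂ) = z₂) (hg₂ : (g ⟨z₂, hm₂⟩ : ℂ) = z₃)
    (hg₃ : (g ⟨z₃, hm₃⟩ : ℂ) = z₁)
    (hh₁₁ : (h₁ ⟨z₁, hm₁⟩ : ℂ) = -z₁) (hh₁₂ : (h₁ ⟨z₂, hm₂⟩ : ℂ) = z₂)
    (hh₁₃ : (h₁ ⟨z₃, hm₃⟩ : ℂ) = z₃)
    (hh₂₁ : (h₂ ⟨z₁, hm₁⟩ : ℂ) = z₁) (hh₂₂ : (h₂ ⟨z₂, hm₂⟩ : ℂ) = -z₂)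
    (hh₂₃ : (h₂ ⟨z₃, hm₃⟩ : ℂ) = z₃)
    (hh₃₁ : (h₃ ⟨z₁, hm₁⟩ : ℂ) = z₁) (hh₃₂ : (h₃ ⟨z₂, hm₂⟩ : ℂ) = z₂)
    (hh₃₃ : (h₃ ⟨z₃, hm₃⟩ : ℂ) = -z₃) :
    (IntermediateField.fixedField (Subgroup.closure {g, h₁ * h₂, h₂ * h₃})).map F.val
        = IntermediateField.adjoin ℚ {Complex.I} ∧
    Module.finrank ℚ (IntermediateField.adjoin ℚ {Complex.I}) = 2 := by
  exact stmt13_general (a := 0) (fun h ↦ absurd h.nonneg (by norm_num))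
    (by simpa [simplestCubic, sub_eq_add_neg] using congrArg Complex.ofReal hρroot)
    (by simp [hρ₂]) (by simp [hρ₃]) Complex.I_sq hz₁ hz₂ hz₃ hF hm₁ hm₂ hm₃ hg₁ hg₂ hg₃
    hh₁₁ hh₁₂ hh₁₃ hh₂₁ hh₂₂ hh₂₃ hh₃₁ hh₃₂ hh₃₃
end
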